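/- arXiv:2408.09625 — 2 statements merged into one kernel-verified Lean document; each statement's English description precedes it below -/
import Mathlib

section
/- (Theorem A, semi-local linearization in the affine space) Let φ be a holomorphic ℂ*-action on ℂⁿ having p ∈ ℂⁿ as a fixed point, and let ψ be the linearized action of φ at p. Then there is an entire holomorphic map F : ℂⁿ → ℂⁿ with F(p) = 0 such that ψ^z ∘ F = F ∘ φ^z for every z ∈ ℂ*. Moreover, there is a φ-invariant open set W ∋ p in ℂⁿ such that F restricted to W is a biholomorphism onto the open set F(W). -/
open Set Filter Topology Metric MeasureTheory Complex

lemma SL_hasFDerivAt_param {E G : Type*} [NormedAddCommGroup E] [NormedSpace ℂ E]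
    [FiniteDimensional ℂ E] [NormedAddCommGroup G] [NormedSpace ℂ G] [FiniteDimensional ℂ G]
    (g : E → ℝ → G) (hc : Continuous (fun q : E × ℝ => g q.1 q.2))
    (hd : ∀ t, Differentiable ℂ (fun x => g x t)) (a b : ℝ) (x₀ : E) :
    HasFDerivAt (fun x => ∫ t in a..b, g x t)
      (∫ t in a..b, fderiv ℂ (fun x => g x t) x₀) x₀ := by
  have hproper : ProperSpace E := FiniteDimensional.proper ℂ E
  have : CompleteSpace G := FiniteDimensional.complete ℂ G
  have : ProperSpace (E →L[ℂ] G) := FiniteDimensional.proper ℂ _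
  obtain ⟨C, hC⟩ := ((isCompact_closedBall x₀ 2).prod (isCompact_uIcc (a := a) (b := b))).exists_bound_of_continuousOn hc.continuousOn
  borelize E
  have hct : ∀ x, Continuous (g x) := fun x =>
    hc.comp (continuous_const.prodMk continuous_id : Continuous fun t : ℝ => (x, t))
  refine intervalIntegral.hasFDerivAt_integral_of_dominated_of_fderiv_le
    (F' := fun x t => fderiv ℂ (fun x => g x t) x) (s := ball x₀ 1) (bound := fun _ => 2 * C)
    (ball_mem_nhds _ one_pos) ?_ ?_ ?_ ?_ ?_ ?_
  · exact Eventually.of_forall fun x => (hct x).aestronglyMeasurable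
  · exact (hct x₀).intervalIntegrable _ _
  · have h := measurable_fderiv_with_param ℂ (f := fun (t : ℝ) (x : E) => g x t)
      (hc.comp continuous_swap)
    have h2 : Measurable fun t : ℝ => fderiv ℂ (fun x => g x t) x₀ :=
      h.comp (measurable_id.prodMk measurable_const)
    exact h2.aestronglyMeasurable
  · refine Eventually.of_forall fun t ht x hx => ?_
    have := norm_fderiv_le_div_of_mapsTo_ball (f := fun x => g x t) (c := x) (R₁ := 1) (R₂ := 2 * C)
      (hd t).differentiableOn ?_ one_pos
    · simpa using this
    intro y hy
    have hx2 : x ∈ closedBall x₀ 2 := by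
      simp only [mem_ball, mem_closedBall] at *; linarith
    have hy2 : y ∈ closedBall x₀ 2 := by
      simp only [mem_ball, mem_closedBall] at *; linarith [dist_triangle y x x₀]
    have h1 := hC (x, t) ⟨hx2, uIoc_subset_uIcc ht⟩
    have h2 := hC (y, t) ⟨hy2, uIoc_subset_uIcc ht⟩
    simp only [mem_closedBall, dist_eq_norm] at *
    linarith [norm_sub_le (g y t) (g x t)]
  · exact intervalIntegrable_const
  · exact Eventually.of_forall fun t _ x _ => (hd t x).hasFDerivAt

lemma SL_fderiv_apply {E G : Type*} [NormedAddCommGroup E] [NormedSpace ℂ E]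
    [FiniteDimensional ℂ E] [NormedAddCommGroup G] [NormedSpace ℂ G] [FiniteDimensional ℂ G]
    (f : E → G) (hf : Differentiable ℂ f) (v : E) :
    Differentiable ℂ (fun x => fderiv ℂ f x v) := by
  have : CompleteSpace G := FiniteDimensional.complete ℂ G
  have hline : ∀ x, Differentiable ℂ (fun w : ℂ => f (x + w • v)) := fun x =>
    hf.comp (by fun_prop)
  have key : (fun x => fderiv ℂ f x v) = fun x => (2 * Real.pi * I : ℂ)⁻¹ •
      ∫ t in (0 : ℝ)..2 * Real.pi, deriv (circleMap 0 1) t •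
        (((circleMap 0 1 t - 0) ^ 2)⁻¹ • f (x + circleMap 0 1 t • v)) := by
    funext x
    have h1 := two_pi_I_inv_smul_circleIntegral_sub_sq_inv_smul_of_differentiable
      (isOpen_univ) (c := 0) (w₀ := 0) (R := 1) (subset_univ _)
      (hline x).differentiableOn (mem_ball_self one_pos)
    rw [circleIntegral] at h1
    rw [h1]
    have h2 : HasDerivAt (fun w : ℂ => x + w • v) v 0 := by
      simpa using ((hasDerivAt_id (0:ℂ)).smul_const v).const_add x
    have h3 : HasFDerivAt f (fderiv ℂ f x) (x + (0:ℂ) • v) := by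
      simpa using (hf x).hasFDerivAt
    exact (h3.comp_hasDerivAt (0:ℂ) h2).deriv.symm
  rw [key]
  refine Differentiable.const_smul (fun x => ?_) _
  refine (SL_hasFDerivAt_param (fun x t => deriv (circleMap 0 1) t •
        (((circleMap 0 1 t - 0) ^ 2)⁻¹ • f (x + circleMap 0 1 t • v))) ?_ ?_ _ _ x).differentiableAt
  · have hne : ∀ q : E × ℝ, (circleMap 0 1 q.2 - 0) ^ 2 ≠ 0 := fun q => by
      simp [circleMap]
    have hfc := hf.continuous
    have hcm : Continuous fun q : E × ℝ => circleMap 0 1 q.2 :=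
      (continuous_circleMap 0 1).comp continuous_snd
    simp only [deriv_circleMap]
    refine Continuous.smul (by fun_prop) (Continuous.smul (Continuous.inv₀ (by fun_prop) hne) ?_)
    exact hfc.comp (by fun_prop)
  · intro t
    exact ((hf.comp (by fun_prop)).const_smul _).const_smul _

lemma SL_contDiff {E G : Type*} [NormedAddCommGroup E] [NormedSpace ℂ E]
    [FiniteDimensional ℂ E] [NormedAddCommGroup G] [NormedSpace ℂ G] [FiniteDimensional ℂ G]
    (f : E → G) (hf : Differentiable ℂ f) : ContDiff ℂ 1 f := by
  rw [contDiff_one_iff_fderiv]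
  refine ⟨hf, ?_⟩
  rw [← contDiff_zero (𝕜 := ℂ), contDiff_clm_apply_iff]
  intro v
  rw [contDiff_zero]
  exact (SL_fderiv_apply f hf v).continuous

lemma SL_strip_aux {E : Type*} [NormedAddCommGroup E] [NormedSpace ℂ E]
    (A : ℂ → E →L[ℂ] E) (hA : Differentiable ℂ A)
    (hadd : ∀ a b, A (a + b) = (A a).comp (A b)) {M δ : ℝ} (hM : ∀ θ : ℝ, ‖A θ‖ ≤ M)
    (y : E) (a b : ℝ) (ha : ‖A (a * I) y‖ ≤ δ) (hb : ‖A (b * I) y‖ ≤ δ) (ζ : ℂ)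
    (h1 : a ≤ ζ.im) (h2 : ζ.im ≤ b) : ‖A ζ y‖ ≤ M * δ := by
  have hM0 : 0 ≤ M := (norm_nonneg _).trans (hM 0)
  have hdec : ∀ z : ℂ, ‖A z y‖ ≤ M * ‖A (z.im * I) y‖ := by
    intro z
    have : A z y = A z.re (A (z.im * I) y) := by
      conv_lhs => rw [← re_add_im z, hadd]
      rfl
    rw [this]
    exact ((A z.re).le_opNorm _).trans (by gcongr; exact hM _)
  have hAy : Differentiable ℂ fun z => A z y := fun z => (hA z).clm_apply (differentiableAt_const y)
  rcases eq_or_lt_of_le (h1.trans h2) with hab | hab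
  · have : ζ.im = a := by linarith
    refine (hdec ζ).trans ?_
    rw [this]; gcongr
  refine PhragmenLindelof.horizontal_strip (f := fun z => A z y) (a := a) (b := b)
    hAy.diffContOnCl ⟨0, ?_, 0, ?_⟩ ?_ ?_ h1 h2
  · have : 0 < b - a := by linarith
    positivity
  · have hcont : Continuous fun s : ℝ => A (s * I) y := hAy.continuous.comp (by fun_prop)
    obtain ⟨C, hC⟩ := (isCompact_Icc (a := a) (b := b)).exists_bound_of_continuousOn
      hcont.continuousOn
    refine Asymptotics.IsBigO.of_bound (M * C) ?_
    refine mem_inf_of_right ?_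
    intro z hz
    simp only [mem_preimage] at hz
    have h3 := hC z.im ⟨hz.1.le, hz.2.le⟩
    simp only [zero_mul, Real.exp_zero, norm_one, mul_one, mem_ofPred_eq]
    exact (hdec z).trans (by gcongr)
  · intro z hz
    refine (hdec z).trans ?_
    rw [hz]; gcongr
  · intro z hz
    refine (hdec z).trans ?_
    rw [hz]; gcongr

lemma SL_strip {E : Type*} [NormedAddCommGroup E] [NormedSpace ℂ E]
    (A : ℂ → E →L[ℂ] E) (hA : Differentiable ℂ A) (h0 : A 0 = ContinuousLinearMap.id ℂ E)
    (hadd : ∀ a b, A (a + b) = (A a).comp (A b)) {M δ : ℝ} (hM : ∀ θ : ℝ, ‖A θ‖ ≤ M)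
    (hM1 : 1 ≤ M)
    (y : E) (τ : ℂ) (h1 : ‖y‖ ≤ δ) (h2 : ‖A τ y‖ ≤ δ) (ζ : ℂ)
    (hζ : ζ.im ∈ uIcc 0 τ.im) : ‖A ζ y‖ ≤ M * (M * δ) := by
  have hδ : 0 ≤ δ := (norm_nonneg _).trans h1
  have e0 : ‖A ((0:ℝ) * I) y‖ ≤ M * δ := by
    simp only [ofReal_zero, zero_mul, h0]
    exact h1.trans (by nlinarith)
  have e1 : ‖A (τ.im * I) y‖ ≤ M * δ := by
    have : A (τ.im * I) y = A (-τ.re : ℝ) (A τ y) := by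
      rw [← ContinuousLinearMap.comp_apply, ← hadd]
      congr 2
      apply Complex.ext <;> simp
    rw [this]
    exact ((A _).le_opNorm _).trans (by gcongr; exact hM _)
  rcases mem_uIcc.1 hζ with h | h
  · exact SL_strip_aux A hA hadd hM y 0 τ.im e0 e1 ζ h.1 h.2
  · exact SL_strip_aux A hA hadd hM y τ.im 0 e1 e0 ζ h.1 h.2

/-- The averaged map. -/
lemma SL_exists_F {E : Type*} [NormedAddCommGroup E] [NormedSpace ℂ E] [FiniteDimensional ℂ E]
    (Φ : ℂ → E → E) (p : E) (hΦ : Differentiable ℂ (fun q : ℂ × E => Φ q.1 q.2))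
    (hΦ0 : ∀ x, Φ 0 x = x) (hΦadd : ∀ a b x, Φ (a + b) x = Φ a (Φ b x))
    (hper : ∀ a x, Φ (a + 2 * Real.pi) x = Φ a x) (hfix : ∀ a, Φ a p = p)
    (A : ℂ → E →L[ℂ] E) (hA : A = fun a => fderiv ℂ (Φ a) p) :
    Differentiable ℂ A ∧ A 0 = ContinuousLinearMap.id ℂ E ∧
    (∀ a b, A (a + b) = (A a).comp (A b)) ∧ (∃ M, 1 ≤ M ∧ ∀ θ : ℝ, ‖A θ‖ ≤ M) ∧
    ∃ F : E → E, Differentiable ℂ F ∧ F p = 0 ∧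
      HasFDerivAt F (ContinuousLinearMap.id ℂ E) p ∧ ∀ a x, F (Φ a x) = A a (F x) := by
  have hΦx : ∀ a, Differentiable ℂ (Φ a) := fun a =>
    hΦ.comp (g := fun q : ℂ × E => Φ q.1 q.2) (f := fun x => (a, x)) (by fun_prop)
  have hΦa : ∀ x, Differentiable ℂ (fun a => Φ a x) := fun x =>
    hΦ.comp (g := fun q : ℂ × E => Φ q.1 q.2) (f := fun a => (a, x)) (by fun_prop)
  have hAd : ∀ a, HasFDerivAt (Φ a) (A a) p := fun a => by
    rw [hA]; exact (hΦx a p).hasFDerivAt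
  have hAv : ∀ a v, A a v = fderiv ℂ (fun q : ℂ × E => Φ q.1 q.2) (a, p) (0, v) := by
    intro a v
    have h1 : HasFDerivAt (fun x : E => (a, x)) (ContinuousLinearMap.inr ℂ ℂ E) p :=
      hasFDerivAt_prodMk_right a p
    have h2 := ((hΦ (a, p)).hasFDerivAt).comp p h1
    rw [(hAd a).unique h2]
    simp
  have hAdiff : Differentiable ℂ A := by
    refine ContDiff.differentiable (n := 1) ?_ one_ne_zero
    rw [contDiff_clm_apply_iff]
    intro v
    have : Differentiable ℂ fun a => A a v := by
      simp only [hAv]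
      exact (SL_fderiv_apply _ hΦ (0, v)).comp
        (g := fun q : ℂ × E => fderiv ℂ (fun q : ℂ × E => Φ q.1 q.2) q (0, v))
        (f := fun a : ℂ => (a, p)) (by fun_prop)
    exact this.contDiff
  have hA0 : A 0 = ContinuousLinearMap.id ℂ E := by
    have : Φ 0 = id := funext hΦ0
    rw [hA]; simp [this]
  have hAadd : ∀ a b, A (a + b) = (A a).comp (A b) := by
    intro a b
    have h1 : HasFDerivAt (Φ a) (A a) (Φ b p) := by rw [hfix]; exact hAd a
    have h2 := h1.comp p (hAd b)
    have h3 : Φ (a + b) = Φ a ∘ Φ b := funext fun x => hΦadd a b x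
    exact (hAd (a + b)).unique (h3 ▸ h2)
  have hAper : ∀ a, A (a + 2 * Real.pi) = A a := by
    intro a
    have h3 : Φ (a + 2 * Real.pi) = Φ a := funext fun x => hper a x
    rw [hA]; simp only [h3]
  have hAR : Continuous fun θ : ℝ => A θ := hAdiff.continuous.comp (by fun_prop)
  have hARper : Function.Periodic (fun θ : ℝ => A θ) (2 * Real.pi) := by
    intro θ
    simpa using hAper θ
  have hbound : ∃ M, 1 ≤ M ∧ ∀ θ : ℝ, ‖A θ‖ ≤ M := by
    obtain ⟨C, hC⟩ := (isCompact_Icc (a := 0) (b := 2 * Real.pi)).exists_bound_of_continuousOn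
      hAR.continuousOn
    refine ⟨max 1 C, le_max_left _ _, fun θ => ?_⟩
    obtain ⟨t, ht, h⟩ := hARper.exists_mem_Ico₀ Real.two_pi_pos θ
    rw [h]
    exact (hC t ⟨ht.1, ht.2.le⟩).trans (le_max_right _ _)
  refine ⟨hAdiff, hA0, hAadd, hbound, ?_⟩
  have hAinv : ∀ a, (A (-a)).comp (A a) = ContinuousLinearMap.id ℂ E := fun a => by
    rw [← hAadd]; simp [hA0]
  have hpi : (2 * Real.pi : ℝ) ≠ 0 := Real.two_pi_pos.ne'
  have hpiC : ((2 * Real.pi : ℝ) : ℂ) ≠ 0 := ofReal_ne_zero.2 hpi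
  let g : E → ℝ → E := fun x θ => A (-θ) (Φ θ x - p)
  have hgd : ∀ t, Differentiable ℂ fun x => g x t := fun t =>
    (A (-t)).differentiable.comp ((hΦx t).sub_const p)
  have hgc : Continuous fun q : E × ℝ => g q.1 q.2 := by
    have h1 : Continuous fun q : E × ℝ => A (-(q.2 : ℂ)) := hAdiff.continuous.comp (by fun_prop)
    have h2 : Continuous fun q : E × ℝ => Φ q.2 q.1 :=
      hΦ.continuous.comp (g := fun q : ℂ × E => Φ q.1 q.2)
        (f := fun q : E × ℝ => ((q.2 : ℂ), q.1)) (by fun_prop)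
    exact h1.clm_apply (h2.sub continuous_const)
  let J : E → E := fun x => ∫ t in (0:ℝ)..2 * Real.pi, g x t
  have hJ := fun x => SL_hasFDerivAt_param g hgc hgd 0 (2 * Real.pi) x
  let c : ℂ := ((2 * Real.pi : ℝ) : ℂ)⁻¹
  have hFd : Differentiable ℂ fun x => c • J x := fun x => (hJ x).differentiableAt.const_smul c
  refine ⟨fun x => c • J x, hFd, ?_, ?_, ?_⟩
  · simp [J, g, hfix]
  · have h1 := (hJ p).const_smul c
    have : ∀ t : ℝ, fderiv ℂ (fun x => g x t) p = ContinuousLinearMap.id ℂ E := by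
      intro t
      have h2 : HasFDerivAt (fun x => g x t) ((A (-t)).comp (A t)) p :=
        (A (-t)).hasFDerivAt.comp p ((hAd t).sub_const p)
      rw [h2.fderiv, hAinv]
    have h3 : c • (∫ t in (0:ℝ)..2 * Real.pi, fderiv ℂ (fun x => g x t) p) =
        ContinuousLinearMap.id ℂ E := by
      simp_rw [this]
      rw [intervalIntegral.integral_const, sub_zero, ← Complex.coe_smul, smul_smul,
        inv_mul_cancel₀ hpiC, one_smul]
    rw [h3] at h1
    exact h1
  · intro a x
    -- real parameters first
    have hreal : ∀ s : ℝ, c • J (Φ s x) = A s (c • J x) := by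
      intro s
      have hgs : ∀ t : ℝ, g (Φ s x) t = A s (g x (t + s)) := by
        intro t
        simp only [g]
        rw [← ContinuousLinearMap.comp_apply, ← hAadd, ← hΦadd]
        congr 3
        · push_cast; ring
        · push_cast; rfl
      have hgper : Function.Periodic (g x) (2 * Real.pi) := by
        intro t
        simp only [g]
        have e1 : A (-((t + 2 * Real.pi : ℝ) : ℂ)) = A (-t) := by
          rw [← hAper]; congr 1; push_cast; ring
        have e2 : Φ ((t + 2 * Real.pi : ℝ) : ℂ) x = Φ t x := by
          rw [← hper t]; congr 1; push_cast; ring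
        rw [e1, e2]
      have hgx : Continuous (g x) :=
        hgc.comp (continuous_const.prodMk continuous_id : Continuous fun t : ℝ => (x, t))
      have : J (Φ s x) = A s (J x) := by
        simp only [J, hgs]
        have hcomm := (A s).intervalIntegral_comp_comm (μ := volume)
          (a := 0) (b := 2 * Real.pi) (f := fun t => g x (t + s))
          ((hgx.comp (by fun_prop : Continuous fun t : ℝ => t + s)).intervalIntegrable _ _)
        rw [hcomm, intervalIntegral.integral_comp_add_right (fun t => g x t)]
        congr 1
        have := hgper.intervalIntegral_add_eq s 0
        rw [zero_add] at this ⊢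
        rw [add_comm, this]
      rw [this, map_smul]
    have hd1 : Differentiable ℂ fun a => c • J (Φ a x) := hFd.comp (hΦa x)
    have hd2 : Differentiable ℂ fun a => A a (c • J x) := fun z =>
      (hAdiff z).clm_apply (differentiableAt_const _)
    have hfr : ∃ᶠ z in 𝓝[≠] (0:ℂ), c • J (Φ z x) = A z (c • J x) := by
      have ht : Tendsto (fun t : ℝ => (t : ℂ)) (𝓝[≠] 0) (𝓝[≠] 0) := by
        refine tendsto_nhdsWithin_of_tendsto_nhds_of_eventually_within _ ?_ ?_
        · exact (continuous_ofReal.tendsto' 0 0 (by simp)).mono_left nhdsWithin_le_nhds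
        · filter_upwards [self_mem_nhdsWithin] with t ht
          simpa using ht
      exact ht.frequently (Eventually.frequently (Eventually.of_forall hreal))
    have := AnalyticOnNhd.eq_of_frequently_eq (f := fun a => c • J (Φ a x))
      (g := fun a => A a (c • J x)) (z₀ := 0)
      (fun z _ => hd1.analyticAt z) (fun z _ => hd2.analyticAt z) hfr
    exact congrFun this a

lemma SL_core {E : Type*} [NormedAddCommGroup E] [NormedSpace ℂ E] [FiniteDimensional ℂ E]
    (Φ : ℂ → E → E) (p : E) (hΦ : Differentiable ℂ (fun q : ℂ × E => Φ q.1 q.2))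
    (hΦ0 : ∀ x, Φ 0 x = x) (hΦadd : ∀ a b x, Φ (a + b) x = Φ a (Φ b x))
    (hper : ∀ a x, Φ (a + 2 * Real.pi) x = Φ a x) (hfix : ∀ a, Φ a p = p) :
    ∃ F : E → E, Differentiable ℂ F ∧ F p = 0 ∧
      (∀ a x, fderiv ℂ (Φ a) p (F x) = F (Φ a x)) ∧
      ∃ W : Set E, IsOpen W ∧ p ∈ W ∧ (∀ a, Φ a '' W = W) ∧
        Set.InjOn F W ∧ IsOpen (F '' W) ∧
        ∃ F' : E → E, DifferentiableOn ℂ F' (F '' W) ∧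
          (∀ x ∈ W, F' (F x) = x) ∧ (∀ y ∈ F '' W, F (F' y) = y) := by
  obtain ⟨A, hA⟩ : ∃ A : ℂ → E →L[ℂ] E, A = fun a => fderiv ℂ (Φ a) p := ⟨_, rfl⟩
  obtain ⟨hAd, hA0, hAadd, ⟨M, hM1, hM⟩, F, hF, hFp, hF', hFe⟩ :=
    SL_exists_F Φ p hΦ hΦ0 hΦadd hper hfix A hA
  have : CompleteSpace E := FiniteDimensional.complete ℂ E
  have hΦx : ∀ a, Differentiable ℂ (Φ a) := fun a =>
    hΦ.comp (g := fun q : ℂ × E => Φ q.1 q.2) (f := fun x => (a, x)) (by fun_prop)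
  have hΦa : ∀ x, Differentiable ℂ (fun a => Φ a x) := fun x =>
    hΦ.comp (g := fun q : ℂ × E => Φ q.1 q.2) (f := fun a => (a, x)) (by fun_prop)
  have hAinv : ∀ a y, A (-a) (A a y) = y := fun a y => by
    rw [← ContinuousLinearMap.comp_apply, ← hAadd]; simp [hA0]
  have hΦinv : ∀ a x, Φ (-a) (Φ a x) = x := fun a x => by
    rw [← hΦadd, neg_add_cancel, hΦ0]
  -- local inverse
  obtain ⟨U, V, G, hU, hpU, hGF, hV, h0V, hGU, hFG, hGd⟩ : ∃ (U V : Set E) (G : E → E),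
      IsOpen U ∧ p ∈ U ∧ (∀ x ∈ U, G (F x) = x) ∧ IsOpen V ∧ (0:E) ∈ V ∧ (∀ y ∈ V, G y ∈ U) ∧
      (∀ y ∈ V, F (G y) = y) ∧ (∀ y ∈ V, DifferentiableAt ℂ G y) := by
    have hc : ContDiffAt ℂ 1 F p := (SL_contDiff F hF).contDiffAt
    have hF'' : HasFDerivAt F ((ContinuousLinearEquiv.refl ℂ E : E ≃L[ℂ] E) : E →L[ℂ] E) p := hF'
    let e := hc.toOpenPartialHomeomorph F hF'' one_ne_zero
    have hcG : ContDiffAt ℂ 1 e.symm (F p) := hc.to_localInverse hF'' one_ne_zero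
    have hev := hcG.eventually (by simp)
    obtain ⟨V₀, hV₀, hV₀o, hV₀m⟩ := _root_.eventually_nhds_iff.1 hev
    have hpe : p ∈ e.source := hc.mem_toOpenPartialHomeomorph_source hF'' one_ne_zero
    have hpt : F p ∈ e.target := hc.image_mem_toOpenPartialHomeomorph_target hF'' one_ne_zero
    refine ⟨e.source, e.target ∩ V₀, e.symm, e.open_source, hpe, fun x hx => e.left_inv hx,
      e.open_target.inter hV₀o, ⟨hFp ▸ hpt, hFp ▸ hV₀m⟩, fun y hy => e.map_target hy.1,
      fun y hy => e.right_inv hy.1, fun y hy => (hV₀ y hy.2).differentiableAt one_ne_zero⟩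
  obtain ⟨r, hr, hrV⟩ := Metric.isOpen_iff.1 hV 0 h0V
  obtain ⟨δ, hδ, hδr⟩ : ∃ δ : ℝ, 0 < δ ∧ M * (M * δ) < r := by
    refine ⟨r / (2 * M * M), by positivity, ?_⟩
    have : M * (M * (r / (2 * M * M))) = r / 2 := by field_simp
    linarith
  have hMδ : δ ≤ M * (M * δ) := by nlinarith [mul_le_mul hM1 hM1 zero_le_one (by linarith)]
  have hδV : ∀ y : E, ‖y‖ < δ → y ∈ V := fun y hy => hrV (by simpa using by linarith)
  -- key step
  have key : ∀ u v τ, u ∈ U → v ∈ U → ‖F u‖ < δ → ‖F v‖ < δ → F u = A τ (F v) → u = Φ τ v := by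
    intro u v τ hu hv hFu hFv huv
    have hs : ∀ ζ : ℂ, ζ.im ∈ uIcc 0 τ.im → A ζ (F v) ∈ V := fun ζ hζ => by
      have := SL_strip A hAd hA0 hAadd hM hM1 (F v) τ hFv.le (huv ▸ hFu.le) ζ hζ
      exact hrV (by simpa using by linarith)
    have hAF : Differentiable ℂ fun ζ => A ζ (F v) := fun z =>
      (hAd z).clm_apply (differentiableAt_const _)
    have hpre : IsPreconnected {ζ : ℂ | ζ.im ∈ uIcc 0 τ.im} :=
      ((convex_uIcc (0:ℝ) τ.im).is_linear_preimage
        (f := Complex.im) Complex.imCLM.toLinearMap.isLinear).isPreconnected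
    have hO : IsOpen {ζ : ℂ | A ζ (F v) ∈ V} := hV.preimage hAF.continuous
    have han : AnalyticOnNhd ℂ (fun ζ => G (A ζ (F v))) {ζ : ℂ | ζ.im ∈ uIcc 0 τ.im} := by
      have : DifferentiableOn ℂ (fun ζ => G (A ζ (F v))) {ζ : ℂ | A ζ (F v) ∈ V} :=
        fun ζ hζ => ((hGd _ hζ).comp ζ (hAF ζ)).differentiableWithinAt
      exact (this.analyticOnNhd hO).mono hs
    have heq := AnalyticOnNhd.eqOn_of_preconnected_of_eventuallyEq
      (f := fun ζ => G (A ζ (F v))) (g := fun ζ => Φ ζ v) han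
      (fun z _ => (hΦa v).analyticAt z) hpre (z₀ := 0)
      (by simp) ?_
    · have h1 := heq (x := τ) (by simp)
      simp only [← huv, hGF u hu] at h1
      exact h1
    · have h1 : ∀ᶠ ζ in 𝓝 (0:ℂ), Φ ζ v ∈ U := by
        refine (hΦa v).continuous.continuousAt.eventually_mem (hU.mem_nhds ?_)
        rw [hΦ0]; exact hv
      filter_upwards [h1] with ζ hζ
      rw [← hFe, hGF _ hζ]
  let W : Set E := {x | ∃ a, Φ a x ∈ U ∧ ‖F (Φ a x)‖ < δ}
  have hWo : IsOpen W := by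
    have : W = ⋃ a, {x | Φ a x ∈ U ∧ ‖F (Φ a x)‖ < δ} := by ext x; simp [W]
    rw [this]
    refine isOpen_iUnion fun a => ?_
    exact (hU.preimage (hΦx a).continuous).inter
      (isOpen_lt (hF.continuous.comp (hΦx a).continuous).norm continuous_const)
  have hWsub : ∀ a x, x ∈ W → Φ a x ∈ W := by
    rintro a x ⟨b, hb1, hb2⟩
    refine ⟨b - a, ?_⟩
    rw [← hΦadd, sub_add_cancel]
    exact ⟨hb1, hb2⟩
  have hinj : InjOn F W := by
    rintro x₁ ⟨a, ha1, ha2⟩ x₂ ⟨b, hb1, hb2⟩ h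
    have h1 := key (Φ a x₁) (Φ b x₂) (a - b) ha1 hb1 ha2 hb2 (by
      rw [← hFe, ← hΦadd, sub_add_cancel, hFe, hFe, h])
    rw [← hΦadd, sub_add_cancel] at h1
    rw [← hΦinv a x₁, h1, hΦinv]
  have hloc : ∀ a y, ‖A a y‖ < δ → Φ (-a) (G (A a y)) ∈ W ∧ F (Φ (-a) (G (A a y))) = y := by
    intro a y hy
    have hy' := hδV _ hy
    constructor
    · refine ⟨a, ?_⟩
      rw [← hΦadd, add_neg_cancel, hΦ0, hFG _ hy']
      exact ⟨hGU _ hy', hy⟩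
    · rw [hFe, hFG _ hy', hAinv]
  have himg : F '' W = ⋃ a, {y | ‖A a y‖ < δ} := by
    ext y
    simp only [mem_image, mem_iUnion, mem_ofPred_eq]
    constructor
    · rintro ⟨x, ⟨a, ha1, ha2⟩, rfl⟩
      exact ⟨a, by rwa [← hFe]⟩
    · rintro ⟨a, ha⟩
      exact ⟨_, (hloc a y ha).1, (hloc a y ha).2⟩
  have hopen : ∀ a, IsOpen {y | ‖A a y‖ < δ} := fun a =>
    isOpen_lt (A a).continuous.norm continuous_const
  refine ⟨F, hF, hFp, ?_, W, hWo, ?_, ?_, hinj, ?_, Function.invFunOn F W, ?_, ?_, ?_⟩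
  · intro a x; rw [hFe, hA]
  · refine ⟨0, ?_⟩
    rw [hΦ0, hFp]
    exact ⟨hpU, by simpa using hδ⟩
  · intro a
    apply Subset.antisymm
    · rintro _ ⟨x, hx, rfl⟩
      exact hWsub a x hx
    · intro x hx
      refine ⟨Φ (-a) x, hWsub _ _ hx, ?_⟩
      rw [← hΦadd, add_neg_cancel, hΦ0]
  · rw [himg]
    exact isOpen_iUnion hopen
  · intro y hy
    rw [himg, mem_iUnion] at hy
    obtain ⟨a, ha⟩ := hy
    have hev : Function.invFunOn F W =ᶠ[𝓝 y] fun y' => Φ (-a) (G (A a y')) := by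
      filter_upwards [(hopen a).mem_nhds ha] with y' hy'
      obtain ⟨h1, h2⟩ := hloc a y' hy'
      have h3 : ∃ x ∈ W, F x = y' := ⟨_, h1, h2⟩
      exact hinj (Function.invFunOn_mem h3) h1 ((Function.invFunOn_eq h3).trans h2.symm)
    have hd : DifferentiableAt ℂ (fun y' => Φ (-a) (G (A a y'))) y :=
      (hΦx (-a) _).comp y ((hGd _ (hδV _ ha)).comp y (A a).differentiableAt)
    exact (hev.differentiableAt_iff.2 hd).differentiableWithinAt
  · intro x hx
    exact hinj.leftInvOn_invFunOn hx
  · intro y hy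
    exact Function.invFunOn_eq hy

/-- **Theorem A (semi-local linearization in the affine space).**
Let `φ` be a holomorphic `ℂ*`-action on `ℂⁿ` having `p` as a fixed point, and let
`ψᶻ = D(φᶻ)(p)` be the linearized action of `φ` at `p`. Then there is an entire
holomorphic map `F : ℂⁿ → ℂⁿ` with `F p = 0` such that `ψᶻ ∘ F = F ∘ φᶻ` for every
`z ∈ ℂ*`; moreover there is a `φ`-invariant open set `W ∋ p` such that `F` restricted
to `W` is a biholomorphism onto the open set `F '' W`. -/
theorem semilocal_linearization_affine
    {n : ℕ} (φ : ℂ → EuclideanSpace ℂ (Fin n) → EuclideanSpace ℂ (Fin n))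
    (p : EuclideanSpace ℂ (Fin n))
    (hφ_hol : DifferentiableOn ℂ
      (fun q : ℂ × EuclideanSpace ℂ (Fin n) => φ q.1 q.2)
      ({z : ℂ | z ≠ 0} ×ˢ (Set.univ : Set (EuclideanSpace ℂ (Fin n)))))
    (hφ_one : φ 1 = id)
    (hφ_mul : ∀ z w : ℂ, z ≠ 0 → w ≠ 0 → φ (z * w) = φ z ∘ φ w)
    (hp : ∀ z : ℂ, z ≠ 0 → φ z p = p) :
    ∃ F : EuclideanSpace ℂ (Fin n) → EuclideanSpace ℂ (Fin n),
      Differentiable ℂ F ∧ F p = 0 ∧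
      (∀ z : ℂ, z ≠ 0 → ∀ x, fderiv ℂ (φ z) p (F x) = F (φ z x)) ∧
      ∃ W : Set (EuclideanSpace ℂ (Fin n)),
        IsOpen W ∧ p ∈ W ∧ (∀ z : ℂ, z ≠ 0 → φ z '' W = W) ∧
        Set.InjOn F W ∧ IsOpen (F '' W) ∧
        ∃ F' : EuclideanSpace ℂ (Fin n) → EuclideanSpace ℂ (Fin n),
          DifferentiableOn ℂ F' (F '' W) ∧
          (∀ x ∈ W, F' (F x) = x) ∧ (∀ y ∈ F '' W, F (F' y) = y) := by
  have hopen : IsOpen ({z : ℂ | z ≠ 0} ×ˢ (Set.univ : Set (EuclideanSpace ℂ (Fin n)))) :=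
    isOpen_ne.prod isOpen_univ
  have hexp : ∀ z : ℂ, z ≠ 0 → ∃ a : ℂ, exp (a * I) = z := fun z hz =>
    ⟨log z / I, by rw [div_mul_cancel₀ _ I_ne_zero, exp_log hz]⟩
  have hcore := SL_core (fun a x => φ (exp (a * I)) x) p ?_ ?_ ?_ ?_ ?_
  · obtain ⟨F, h1, h2, h3, W, h4, h5, h6, h7⟩ := hcore
    refine ⟨F, h1, h2, fun z hz x => ?_, W, h4, h5, fun z hz => ?_, h7⟩
    · obtain ⟨a, rfl⟩ := hexp z hz
      exact h3 a x
    · obtain ⟨a, rfl⟩ := hexp z hz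
      exact h6 a
  · intro q
    have hm : (exp (q.1 * I), q.2) ∈
        ({z : ℂ | z ≠ 0} ×ˢ (Set.univ : Set (EuclideanSpace ℂ (Fin n)))) :=
      ⟨exp_ne_zero _, mem_univ _⟩
    have hd := hφ_hol.differentiableAt (hopen.mem_nhds hm)
    exact hd.comp q (f := fun q : ℂ × EuclideanSpace ℂ (Fin n) => (exp (q.1 * I), q.2))
      (by fun_prop)
  · intro x; simp [hφ_one]
  · intro a b x
    simp only [add_mul, exp_add]
    rw [hφ_mul _ _ (exp_ne_zero _) (exp_ne_zero _)]
    rfl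
  · intro a x
    simp only [add_mul, exp_add, exp_two_pi_mul_I, mul_one]
  · intro a
    exact hp _ (exp_ne_zero _)
end

section
/- (Lemma 2.2) Let φ be a holomorphic ℂ*-action on ℂⁿ fixing p, let ψ_p be the linearized action of φ at p, and let F_p : ℂⁿ → ℂⁿ be a holomorphic map satisfying ψ_p^z ∘ F_p = F_p ∘ φ^z for all z ∈ ℂ*, F_p(p) = 0 and DF_p(p) = Id. Suppose U ∋ p is an open set in ℂⁿ and V = F_p(U) is open, such that (1) F_p is injective on U, and (2) ψ_p^z(V) ∩ V is connected for each z ∈ ℂ*. Then F_p is injective on the saturation Sat(U,φ) of U by the orbits of φ. -/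
open Metric Set Filter Topology in
/-- A continuous function, holomorphic off its zero set, that vanishes near `0`, vanishes. -/
lemma rado_line (k : ℂ → ℂ) (r δ : ℝ) (hr : 1 < r) (hδ : 0 < δ)
    (hc : ContinuousOn k (closedBall 0 r))
    (hd : ∀ z ∈ ball (0 : ℂ) r, k z ≠ 0 → DifferentiableAt ℂ k z)
    (h0 : ∀ z ∈ ball (0 : ℂ) δ, k z = 0) : k 1 = 0 := by
  by_contra h1
  obtain ⟨M, hM⟩ := (isCompact_closedBall (0 : ℂ) r).exists_bound_of_continuousOn hc
  set O : Set ℂ := ball 0 r ∩ k ⁻¹' {0}ᶜ with hO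
  have hOo : IsOpen O :=
    (hc.mono ball_subset_closedBall).isOpen_inter_preimage isOpen_ball isOpen_compl_singleton
  have hcl : closure O ⊆ closedBall 0 r :=
    closure_minimal (fun z hz => ball_subset_closedBall hz.1) isClosed_closedBall
  have hclδ : closure O ⊆ (ball 0 δ)ᶜ :=
    closure_minimal (fun z hz hz' => hz.2 (h0 z hz')) isOpen_ball.isClosed_compl
  have hne : ∀ z ∈ closure O, z ≠ 0 := by
    rintro z hz rfl
    exact hclδ hz (mem_ball_self hδ)
  have h1O : (1 : ℂ) ∈ O := ⟨by simpa using hr, h1⟩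
  have key : ∀ m : ℕ, ‖k 1‖ ≤ M / r ^ m := by
    intro m
    have hdc : DiffContOnCl ℂ (fun z => k z / z ^ m) O := by
      refine ⟨fun z hz => ?_, ?_⟩
      · exact ((hd z hz.1 hz.2).div (differentiableAt_id.pow m)
          (pow_ne_zero _ (hne z (subset_closure hz)))).differentiableWithinAt
      · exact (hc.mono hcl).div (by fun_prop) (fun z hz => pow_ne_zero _ (hne z hz))
    have := Complex.norm_le_of_forall_mem_frontier_norm_le (C := M / r ^ m)
      (isBounded_ball.subset inter_subset_left) hdc ?_ (subset_closure h1O)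
    · simpa using this
    · intro z hz
      have hzc : z ∈ closure O := frontier_subset_closure hz
      have hzO : z ∉ O := by
        rw [hOo.frontier_eq] at hz
        exact hz.2
      have hM0 : 0 ≤ M := (norm_nonneg _).trans (hM z (hcl hzc))
      by_cases hk : k z = 0
      · simp only [hk, zero_div, norm_zero]
        positivity
      · have hzr : r ≤ ‖z‖ := by
          by_contra hlt
          exact hzO ⟨by simpa using hlt, hk⟩
        rw [norm_div, norm_pow]
        have := hM z (hcl hzc)
        gcongr
  have hlim : Tendsto (fun m : ℕ => M / r ^ m) atTop (𝓝 0) :=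
    tendsto_const_nhds.div_atTop (tendsto_pow_atTop_atTop_of_one_lt hr)
  exact h1 (norm_le_zero_iff.1 (ge_of_tendsto' hlim key))

open Metric Set Filter Topology in
/-- Several-variables version on a ball. -/
lemma rado_ball {E : Type*} [NormedAddCommGroup E] [NormedSpace ℂ E]
    (k : E → ℂ) (a : E) (r : ℝ)
    (hc : ContinuousOn k (ball a r))
    (hd : ∀ z ∈ ball a r, k z ≠ 0 → DifferentiableAt ℂ k z)
    (h0 : ∀ᶠ z in 𝓝 a, k z = 0) (w : E) (hw : w ∈ ball a r) : k w = 0 := by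
  set v := w - a with hv
  have hvr : ‖v‖ < r := by rwa [hv, ← dist_eq_norm]
  obtain ⟨ρ, hρ1, hρ⟩ : ∃ ρ : ℝ, 1 < ρ ∧ ρ * ‖v‖ < r := by
    have h : ∀ᶠ ρ : ℝ in 𝓝 1, ρ * ‖v‖ < r := by
      have : ContinuousAt (fun ρ : ℝ => ρ * ‖v‖) 1 := by fun_prop
      exact this.eventually_lt continuousAt_const (by simpa using hvr)
    obtain ⟨ρ, h1, h2⟩ := ((h.filter_mono nhdsWithin_le_nhds).and
      (self_mem_nhdsWithin : Ioi (1:ℝ) ∈ 𝓝[>] 1)).exists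
    exact ⟨ρ, h2, h1⟩
  have hmem : ∀ ζ ∈ closedBall (0 : ℂ) ρ, a + ζ • v ∈ ball a r := by
    intro ζ hζ
    rw [mem_closedBall_zero_iff] at hζ
    rw [mem_ball, dist_eq_norm, add_sub_cancel_left, norm_smul]
    exact (mul_le_mul_of_nonneg_right hζ (norm_nonneg _)).trans_lt hρ
  have hline : Continuous (fun ζ : ℂ => a + ζ • v) := by fun_prop
  obtain ⟨δ, hδ, hδ0⟩ : ∃ δ > 0, ∀ ζ ∈ ball (0 : ℂ) δ, k (a + ζ • v) = 0 := by
    have : Tendsto (fun ζ : ℂ => a + ζ • v) (𝓝 0) (𝓝 a) := by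
      simpa using hline.tendsto 0
    exact Metric.eventually_nhds_iff_ball.1 (this.eventually h0)
  have := rado_line (fun ζ => k (a + ζ • v)) ρ δ hρ1 hδ
    (hc.comp hline.continuousOn hmem)
    (fun z hz hk => (hd _ (hmem z (ball_subset_closedBall hz)) hk).comp z (by fun_prop)) hδ0
  simpa [hv] using this

open Metric Set Filter Topology in
/-- Directional derivatives of an entire map are entire. -/
lemma differentiable_fderiv_apply_entire {n : ℕ}
    {F : EuclideanSpace ℂ (Fin n) → EuclideanSpace ℂ (Fin n)} (hF : Differentiable ℂ F)
    (v : EuclideanSpace ℂ (Fin n)) : Differentiable ℂ (fun x => fderiv ℂ F x v) := by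
  have hrep : ∀ x, fderiv ℂ F x v = (2 * Real.pi * Complex.I : ℂ)⁻¹ •
      ∫ θ : ℝ in (0)..(2 * Real.pi), (deriv (circleMap 0 1) θ * (1 / (circleMap 0 1 θ) ^ 2)) •
        F (x + circleMap 0 1 θ • v) := by
    intro x
    have hline : HasDerivAt (fun ζ : ℂ => F (x + ζ • v)) (fderiv ℂ F x v) 0 := by
      have h1 : HasDerivAt (fun ζ : ℂ => x + ζ • v) v 0 := by
        simpa using ((hasDerivAt_id (0 : ℂ)).smul_const v).const_add x
      have h2 : HasFDerivAt F (fderiv ℂ F x) (x + (0 : ℂ) • v) := by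
        simpa using (hF x).hasFDerivAt
      exact h2.comp_hasDerivAt (0 : ℂ) h1
    have hd : Differentiable ℂ (fun ζ : ℂ => F (x + ζ • v)) := hF.comp (by fun_prop)
    have h := hd.differentiableOn.deriv_eq_smul_circleIntegral (c := 0) (R := 1) one_pos
    rw [hline.deriv] at h
    rw [eq_inv_smul_iff₀ Complex.two_pi_I_ne_zero, ← h, circleIntegral]
    simp only [sub_zero, smul_smul]
  have hfun : (fun x => fderiv ℂ F x v) = fun x => (2 * Real.pi * Complex.I : ℂ)⁻¹ •
      ∫ θ : ℝ in (0)..(2 * Real.pi), (deriv (circleMap 0 1) θ * (1 / (circleMap 0 1 θ) ^ 2)) •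
        F (x + circleMap 0 1 θ • v) := funext hrep
  rw [hfun]
  have hcne : ∀ θ : ℝ, circleMap 0 1 θ ≠ 0 := fun θ => circleMap_ne_center one_ne_zero
  have hcoef : Continuous (fun θ : ℝ => deriv (circleMap 0 1) θ * (1 / (circleMap 0 1 θ) ^ 2)) := by
    simp only [deriv_circleMap]
    have : Continuous (circleMap 0 1) := continuous_circleMap 0 1
    exact (this.mul continuous_const).mul
      (continuous_const.div (this.pow 2) (fun θ => pow_ne_zero _ (hcne θ)))
  have hcm : Continuous (circleMap 0 1) := continuous_circleMap 0 1
  intro x₀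
  obtain ⟨M, hM⟩ := (isCompact_closedBall x₀ (‖v‖ + 2)).exists_bound_of_continuousOn
    hF.continuous.continuousOn
  have hfb : ∀ y ∈ ball x₀ (‖v‖ + 1), ‖fderiv ℂ F y‖ ≤ 2 * M := by
    intro y hy
    have := Complex.norm_fderiv_le_div_of_mapsTo_ball (f := F) (c := y) (R₁ := 1) (R₂ := 2 * M)
      hF.differentiableOn ?_ one_pos
    · simpa using this
    · intro z hz
      rw [mem_closedBall, dist_eq_norm]
      rw [mem_ball] at hy hz
      have h1 := hM z (by
        rw [mem_closedBall]; linarith [dist_triangle z y x₀])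
      have h2 := hM y (by rw [mem_closedBall]; linarith)
      linarith [norm_sub_le (F z) (F y)]
  have := intervalIntegral.hasFDerivAt_integral_of_dominated_of_fderiv_le (𝕜 := ℂ)
    (μ := MeasureTheory.volume) (a := 0) (b := 2 * Real.pi) (s := ball x₀ 1) (x₀ := x₀)
    (bound := fun _ => 2 * M)
    (F := fun x θ => (deriv (circleMap 0 1) θ * (1 / (circleMap 0 1 θ) ^ 2)) •
        F (x + circleMap 0 1 θ • v))
    (F' := fun x θ => (deriv (circleMap 0 1) θ * (1 / (circleMap 0 1 θ) ^ 2)) •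
        fderiv ℂ F (x + circleMap 0 1 θ • v))
    (ball_mem_nhds _ one_pos) ?_ ?_ ?_ ?_ ?_ ?_
  · exact this.differentiableAt.const_smul ((2 * Real.pi * Complex.I : ℂ)⁻¹)
  · refine Eventually.of_forall fun x => Continuous.aestronglyMeasurable ?_
    exact hcoef.smul (hF.continuous.comp (by fun_prop))
  · refine Continuous.intervalIntegrable ?_ _ _
    exact hcoef.smul (hF.continuous.comp (by fun_prop))
  · refine AEMeasurable.aestronglyMeasurable (Measurable.aemeasurable ?_)
    refine hcoef.measurable.smul ((measurable_fderiv ℂ F).comp ?_)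
    exact (by fun_prop : Continuous fun θ : ℝ => x₀ + circleMap 0 1 θ • v).measurable
  · refine Eventually.of_forall fun θ _ x hx => ?_
    rw [norm_smul]
    have h1 : ‖deriv (circleMap 0 1) θ * (1 / (circleMap 0 1 θ) ^ 2)‖ = 1 := by
      simp [deriv_circleMap]
    rw [h1, one_mul]
    apply hfb
    rw [mem_ball, dist_eq_norm] at hx ⊢
    calc ‖x + circleMap 0 1 θ • v - x₀‖ = ‖(x - x₀) + circleMap 0 1 θ • v‖ := by congr 1; abel
      _ ≤ ‖x - x₀‖ + ‖circleMap 0 1 θ • v‖ := norm_add_le _ _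
      _ < ‖v‖ + 1 := by rw [norm_smul]; simp; linarith
  · exact intervalIntegrable_const
  · refine Eventually.of_forall fun θ _ x _ => ?_
    exact ((hasFDerivAt_comp_add_right (circleMap 0 1 θ • v)).2
      (hF (x + circleMap 0 1 θ • v)).hasFDerivAt).const_smul
        (deriv (circleMap 0 1) θ * (1 / circleMap 0 1 θ ^ 2))

open Metric Set Filter Topology in
lemma continuous_fderiv_entire {n : ℕ}
    {F : EuclideanSpace ℂ (Fin n) → EuclideanSpace ℂ (Fin n)} (hF : Differentiable ℂ F) :
    Continuous (fderiv ℂ F) :=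
  continuous_clm_apply.2 fun v => (differentiable_fderiv_apply_entire hF v).continuous

open Metric Set Filter Topology in
lemma differentiable_det_fderiv {n : ℕ}
    {F : EuclideanSpace ℂ (Fin n) → EuclideanSpace ℂ (Fin n)} (hF : Differentiable ℂ F) :
    Differentiable ℂ (fun x => (fderiv ℂ F x).det) := by
  let b := (EuclideanSpace.basisFun (Fin n) ℂ).toBasis
  have h : ∀ x, (fderiv ℂ F x).det =
      (Matrix.of fun i j => (fderiv ℂ F x (b j)) i).det := by
    intro x
    rw [ContinuousLinearMap.det, ← LinearMap.det_toMatrix b]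
    congr 1
    ext i j
    simp [LinearMap.toMatrix_apply, b]
  simp only [h, Matrix.det_apply, Matrix.of_apply]
  have h2 : ∀ i j, Differentiable ℂ (fun x => (fderiv ℂ F x (b j)) i) := by
    intro i j
    exact (EuclideanSpace.proj (𝕜 := ℂ) i).differentiable.comp
      (differentiable_fderiv_apply_entire hF (b j))
  fun_prop

open Metric Set Filter Topology in
/-- An entire map of `ℂⁿ`, injective near `u₀`, with Jacobian not vanishing identically,
is open at `u₀`. -/
lemma open_of_injOn {n : ℕ}
    {F : EuclideanSpace ℂ (Fin n) → EuclideanSpace ℂ (Fin n)} (hF : Differentiable ℂ F)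
    (p : EuclideanSpace ℂ (Fin n)) (hp : (fderiv ℂ F p).det ≠ 0)
    (N : Set (EuclideanSpace ℂ (Fin n))) (hinj : InjOn F N)
    (u₀ : EuclideanSpace ℂ (Fin n)) (hN : N ∈ 𝓝 u₀) : F '' N ∈ 𝓝 (F u₀) := by
  by_contra hcon
  set h : EuclideanSpace ℂ (Fin n) → ℂ := fun x => (fderiv ℂ F x).det with hh
  have hhd : Differentiable ℂ h := differentiable_det_fderiv hF
  -- the Jacobian does not vanish near `u₀`
  have hnz : ¬ ∀ᶠ u in 𝓝 u₀, h u = 0 := by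
    intro hz
    have hl : Differentiable ℂ (fun ζ : ℂ => h (u₀ + ζ • (p - u₀))) := hhd.comp (by fun_prop)
    have ht : Tendsto (fun ζ : ℂ => u₀ + ζ • (p - u₀)) (𝓝 0) (𝓝 u₀) := by
      have : Continuous (fun ζ : ℂ => u₀ + ζ • (p - u₀)) := by fun_prop
      simpa using this.tendsto 0
    have := AnalyticOnNhd.eq_of_eventuallyEq (𝕜 := ℂ) (z₀ := (0 : ℂ))
      (fun z _ => hl.analyticAt z) (g := fun _ => (0 : ℂ)) (fun z _ => analyticAt_const)
      (ht.eventually hz)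
    have := congrFun this 1
    simp only [one_smul, add_sub_cancel] at this
    exact hp this
  obtain ⟨s, hs, hsN⟩ := nhds_basis_closedBall.mem_iff.1 hN
  set S := closedBall u₀ s with hS
  have hinjS : InjOn F S := hinj.mono hsN
  have hScomp : IsCompact S := isCompact_closedBall _ _
  have hu₀S : u₀ ∈ S := mem_closedBall_self hs.le
  set C := F '' S with hC
  have hCclosed : IsClosed C := (hScomp.image hF.continuous).isClosed
  have hCn : C ∉ 𝓝 (F u₀) := fun hc => hcon (mem_of_superset hc (image_mono hsN))
  have hKclosed : IsClosed (F '' sphere u₀ s) :=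
    ((isCompact_sphere _ _).image hF.continuous).isClosed
  have hK : F u₀ ∉ F '' sphere u₀ s := by
    rintro ⟨y, hy, hyu⟩
    have := hinjS (sphere_subset_closedBall hy) hu₀S hyu
    subst this
    simp at hy
    exact hs.ne hy
  obtain ⟨R, hR, hRK⟩ := Metric.mem_nhds_iff.1 (hKclosed.isOpen_compl.mem_nhds hK)
  set G := Function.invFunOn F S with hG
  have hGS : ∀ w ∈ C, G w ∈ S := fun w hw => Function.invFunOn_mem hw
  have hFG : ∀ w ∈ C, F (G w) = w := fun w hw => Function.invFunOn_eq hw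
  have hGF : ∀ u ∈ S, G (F u) = u := fun u hu =>
    hinjS (hGS _ (mem_image_of_mem _ hu)) hu (hFG _ (mem_image_of_mem _ hu))
  have hGc : ContinuousOn G C := by
    rw [continuousOn_iff_isClosed]
    intro t ht
    refine ⟨F '' (S ∩ t), ((hScomp.inter_right ht).image hF.continuous).isClosed, ?_⟩
    ext w
    constructor
    · rintro ⟨h1, h2⟩
      exact ⟨⟨G w, ⟨hGS w h2, h1⟩, hFG w h2⟩, h2⟩
    · rintro ⟨⟨u, ⟨hu, hut⟩, rfl⟩, h2⟩
      refine ⟨?_, h2⟩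
      rw [mem_preimage, hGF u hu]
      exact hut
  classical
  set k : EuclideanSpace ℂ (Fin n) → ℂ := fun w => if w ∈ C then h (G w) else 0 with hk
  have hreg : ∀ w ∈ ball (F u₀) R, k w ≠ 0 → DifferentiableAt ℂ k w := by
    intro w hw hkw
    have hwC : w ∈ C := by
      by_contra hwC
      exact hkw (by simp [hk, hwC])
    have hdet : (fderiv ℂ F (G w)).det ≠ 0 := by simpa [hk, hwC] using hkw
    set e := (fderiv ℂ F (G w)).toContinuousLinearEquivOfDetNeZero hdet with he
    have hstrict : HasStrictFDerivAt F (e : EuclideanSpace ℂ (Fin n) →L[ℂ] _) (G w) := by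
      rw [he, ContinuousLinearMap.coe_toContinuousLinearEquivOfDetNeZero]
      exact hasStrictFDerivAt_of_hasFDerivAt_of_continuousAt
        (Eventually.of_forall fun y => (hF y).hasFDerivAt)
        (continuous_fderiv_entire hF).continuousAt
    have hGball : G w ∈ ball u₀ s := by
      have h1 := hGS w hwC
      have h2 : G w ∉ sphere u₀ s := fun h2 => hRK hw ⟨G w, h2, hFG w hwC⟩
      rw [hS, mem_closedBall] at h1
      rw [mem_sphere] at h2
      exact lt_of_le_of_ne h1 h2
    have hSn : S ∈ 𝓝 (G w) :=
      mem_of_superset (isOpen_ball.mem_nhds hGball) ball_subset_closedBall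
    have hCn' : C ∈ 𝓝 w := by
      have := hstrict.map_nhds_eq_of_equiv
      rw [hFG w hwC] at this
      rw [← this]
      exact image_mem_map hSn
    have hGd : HasFDerivAt G (e.symm : EuclideanSpace ℂ (Fin n) →L[ℂ] _) w :=
      HasFDerivAt.of_local_left_inverse (hGc.continuousAt hCn') hstrict.hasFDerivAt
        (mem_of_superset hCn' hFG)
    have : k =ᶠ[𝓝 w] h ∘ G := by
      filter_upwards [hCn'] with y hy
      simp [hk, hy]
    exact ((hhd (G w)).comp w hGd.differentiableAt).congr_of_eventuallyEq this
  have hkc : ContinuousOn k (ball (F u₀) R) := by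
    intro w hw
    refine ContinuousAt.continuousWithinAt ?_
    by_cases hkw : k w = 0
    · by_cases hwC : w ∈ C
      · have h1 : Tendsto (fun y => h (G y)) (𝓝[C] w) (𝓝 0) := by
          have : ContinuousWithinAt (fun y => h (G y)) C w :=
            hhd.continuous.continuousAt.comp_continuousWithinAt (hGc w hwC)
          have h2 : h (G w) = 0 := by simpa [hk, hwC] using hkw
          simpa [ContinuousWithinAt, h2] using this
        rw [ContinuousAt, hkw]
        rw [hk]
        refine Tendsto.if ?_ tendsto_const_nhds
        exact h1
      · have : k =ᶠ[𝓝 w] fun _ => 0 := by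
          filter_upwards [hCclosed.isOpen_compl.mem_nhds hwC] with y hy
          simp only [hk, if_neg hy]
        exact continuousAt_const.congr this.symm
    · exact (hreg w hw hkw).continuousAt
  obtain ⟨a, haR, haC⟩ : ∃ a ∈ ball (F u₀) (R / 2), a ∉ C := by
    by_contra hall
    push Not at hall
    exact hCn (mem_of_superset (ball_mem_nhds _ (half_pos hR)) hall)
  have hsub : ball a (R / 2) ⊆ ball (F u₀) R := by
    apply ball_subset_ball'
    rw [mem_ball] at haR
    linarith
  have hz := rado_ball k a (R / 2) (hkc.mono hsub) (fun z hz => hreg z (hsub hz))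
    (by
      filter_upwards [hCclosed.isOpen_compl.mem_nhds haC] with y hy
      simp only [hk, if_neg hy])
  apply hnz
  have hb : ball a (R / 2) ∈ 𝓝 (F u₀) := isOpen_ball.mem_nhds (by rwa [mem_ball_comm])
  filter_upwards [hF.continuous.continuousAt hb, closedBall_mem_nhds u₀ hs] with u hu huS
  have := hz _ hu
  simp only [hk] at this
  rwa [if_pos (mem_image_of_mem F huS), hGF u huS] at this

open Metric Set Filter Topology in
/-- Gluing of two local inverses over a connected overlap. -/
lemma eq_of_preconnected_overlap {E : Type*} [TopologicalSpace E] [T2Space E] {F : E → E}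
    {U U' : Set E} (hU : IsOpen U) (hU' : IsOpen U')
    (hinj : InjOn F U) (hinj' : InjOn F U')
    (hop : ∀ O ⊆ U, IsOpen O → IsOpen (F '' O))
    (hop' : ∀ O ⊆ U', IsOpen O → IsOpen (F '' O))
    (hconn : IsPreconnected (F '' U' ∩ F '' U)) {p : E} (hp : p ∈ U) (hp' : p ∈ U')
    {u u' : E} (hu : u ∈ U) (hu' : u' ∈ U') (huu : F u = F u') : u = u' := by
  by_contra hne
  set B : Set E := {w | ∃ x ∈ U, ∃ x' ∈ U', x ≠ x' ∧ F x = w ∧ F x' = w} with hB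
  have hBo : IsOpen B := by
    rw [isOpen_iff_mem_nhds]
    rintro w ⟨x, hx, x', hx', hxx, h1, h2⟩
    obtain ⟨O, O', hO, hO', hxO, hxO', hd⟩ := t2_separation hxx
    have m1 : F '' (O ∩ U) ∈ 𝓝 w :=
      (hop _ inter_subset_right (hO.inter hU)).mem_nhds ⟨x, ⟨hxO, hx⟩, h1⟩
    have m2 : F '' (O' ∩ U') ∈ 𝓝 w :=
      (hop' _ inter_subset_right (hO'.inter hU')).mem_nhds ⟨x', ⟨hxO', hx'⟩, h2⟩
    filter_upwards [m1, m2]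
    rintro y ⟨z, ⟨hzO, hzU⟩, hz⟩ ⟨z', ⟨hzO', hzU'⟩, hz'⟩
    exact ⟨z, hzU, z', hzU', fun hzz => disjoint_left.1 hd hzO (hzz ▸ hzO'), hz, hz'⟩
  have hA : IsOpen (F '' (U ∩ U')) := hop _ inter_subset_left (hU.inter hU')
  obtain ⟨w, _, ⟨x, ⟨hx, hx'⟩, hxw⟩, ⟨y, hy, y', hy', hyy, h1, h2⟩⟩ :=
    hconn (F '' (U ∩ U')) B hA hBo
      (by
        rintro w ⟨⟨x', hx', h1⟩, ⟨x, hx, h2⟩⟩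
        by_cases hxx : x = x'
        · left
          subst hxx
          exact ⟨x, ⟨hx, hx'⟩, h2⟩
        · right
          exact ⟨x, hx, x', hx', hxx, h2, h1⟩)
      ⟨F p, ⟨mem_image_of_mem F hp', mem_image_of_mem F hp⟩, mem_image_of_mem F ⟨hp, hp'⟩⟩
      ⟨F u, ⟨⟨u', hu', huu.symm⟩, mem_image_of_mem F hu⟩, ⟨u, hu, u', hu', hne, rfl, huu.symm⟩⟩
  exact hyy ((hinj hy hx (h1.trans hxw.symm)).trans (hinj' hx' hy' (hxw.trans h2.symm)))

/-- **Lemma 2.2.** Let `φ` be a holomorphic `ℂ*`-action on `ℂⁿ` fixing `p`, with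
linearized action `ψ_pᶻ = D(φᶻ)(p)` at `p`, and let `F_p : ℂⁿ → ℂⁿ` be a holomorphic
map satisfying `ψ_pᶻ ∘ F_p = F_p ∘ φᶻ` for all `z ∈ ℂ*`, `F_p p = 0` and `D F_p (p) = Id`.
If `U ∋ p` is open, `V = F_p '' U` is open, `F_p` is injective on `U`, and
`ψ_pᶻ(V) ∩ V` is connected for every `z ∈ ℂ*`, then `F_p` is injective on the
saturation `Sat(U, φ)` of `U` by the orbits of `φ`. -/
theorem injective_on_saturation
    {n : ℕ} (φ : ℂ → EuclideanSpace ℂ (Fin n) → EuclideanSpace ℂ (Fin n))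
    (p : EuclideanSpace ℂ (Fin n))
    (hφ_hol : DifferentiableOn ℂ
      (fun q : ℂ × EuclideanSpace ℂ (Fin n) => φ q.1 q.2)
      ({z : ℂ | z ≠ 0} ×ˢ (Set.univ : Set (EuclideanSpace ℂ (Fin n)))))
    (hφ_one : φ 1 = id)
    (hφ_mul : ∀ z w : ℂ, z ≠ 0 → w ≠ 0 → φ (z * w) = φ z ∘ φ w)
    (hp : ∀ z : ℂ, z ≠ 0 → φ z p = p)
    (F : EuclideanSpace ℂ (Fin n) → EuclideanSpace ℂ (Fin n))
    (hF_hol : Differentiable ℂ F)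
    (hF_conj : ∀ z : ℂ, z ≠ 0 → ∀ x, fderiv ℂ (φ z) p (F x) = F (φ z x))
    (hF_p : F p = 0)
    (hF_deriv : fderiv ℂ F p = ContinuousLinearMap.id ℂ (EuclideanSpace ℂ (Fin n)))
    (U : Set (EuclideanSpace ℂ (Fin n))) (hU : IsOpen U) (hpU : p ∈ U)
    (hV : IsOpen (F '' U))
    (hinj : Set.InjOn F U)
    (hconn : ∀ z : ℂ, z ≠ 0 →
      IsConnected ((fderiv ℂ (φ z) p) '' (F '' U) ∩ (F '' U))) :
    Set.InjOn F {y | ∃ z : ℂ, z ≠ 0 ∧ φ z y ∈ U} := by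
  have hdet : (fderiv ℂ F p).det ≠ 0 := by
    rw [hF_deriv]
    simp [ContinuousLinearMap.det]
  have hopen : ∀ A : Set (EuclideanSpace ℂ (Fin n)), Set.InjOn F A → ∀ O ⊆ A, IsOpen O →
      IsOpen (F '' O) := by
    intro A hA O hOA hO
    rw [isOpen_iff_mem_nhds]
    rintro w ⟨x, hx, rfl⟩
    exact open_of_injOn hF_hol p hdet O (hA.mono hOA) x (hO.mem_nhds hx)
  have hcont : ∀ c : ℂ, c ≠ 0 → Continuous (φ c) := by
    intro c hc
    have h := hφ_hol.continuousOn.comp_continuous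
      (f := fun x : EuclideanSpace ℂ (Fin n) => (c, x)) (by fun_prop) (fun x => ⟨hc, trivial⟩)
    exact h
  have hinv : ∀ c : ℂ, c ≠ 0 → ∀ x, φ c⁻¹ (φ c x) = x := by
    intro c hc x
    have h := congrFun (hφ_mul c⁻¹ c (inv_ne_zero hc) hc) x
    rw [inv_mul_cancel₀ hc, hφ_one] at h
    exact h.symm
  have hinv' : ∀ c : ℂ, c ≠ 0 → ∀ x, φ c (φ c⁻¹ x) = x := by
    intro c hc x
    have h := hinv c⁻¹ (inv_ne_zero hc) x
    rwa [inv_inv] at h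
  rintro x ⟨a, ha, hax⟩ y ⟨b, hb, hby⟩ hxy
  -- translate by `b`: compare `φ b y ∈ U` with `φ b x ∈ φ c (U)`, where `c = b / a`
  have hc : b * a⁻¹ ≠ 0 := mul_ne_zero hb (inv_ne_zero ha)
  set c := b * a⁻¹ with hcdef
  have hbx : φ b x = φ c (φ a x) := by
    have h := congrFun (hφ_mul c a hc ha) x
    rwa [hcdef, inv_mul_cancel_right₀ ha] at h
  have hUimg : φ c '' U = φ c⁻¹ ⁻¹' U := by
    ext w
    constructor
    · rintro ⟨u, hu, rfl⟩
      rw [Set.mem_preimage, hinv c hc]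
      exact hu
    · intro hw
      exact ⟨φ c⁻¹ w, hw, hinv' c hc w⟩
  have hU' : IsOpen (φ c '' U) := by
    rw [hUimg]
    exact hU.preimage (hcont _ (inv_ne_zero hc))
  have hinj' : Set.InjOn F (φ c '' U) := by
    rintro _ ⟨u, hu, rfl⟩ _ ⟨v, hv, rfl⟩ huv
    have h : F (φ c⁻¹ (φ c u)) = F (φ c⁻¹ (φ c v)) := by
      rw [← hF_conj _ (inv_ne_zero hc), ← hF_conj _ (inv_ne_zero hc), huv]
    rw [hinv c hc, hinv c hc] at h
    rw [hinj hu hv h]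
  have himg : (fderiv ℂ (φ c) p) '' (F '' U) = F '' (φ c '' U) := by
    rw [Set.image_image, Set.image_image]
    exact Set.image_congr fun u _ => hF_conj c hc u
  have hW := (hconn c hc).isPreconnected
  rw [himg] at hW
  have hkey : φ b y = φ b x := by
    refine eq_of_preconnected_overlap hU hU' hinj hinj' (hopen U hinj) (hopen _ hinj') hW hpU
      ⟨p, hpU, hp c hc⟩ hby ⟨φ a x, hax, hbx.symm⟩ ?_
    rw [← hF_conj b hb, ← hF_conj b hb, hxy]
  rw [← hinv b hb x, ← hinv b hb y, hkey]
end
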